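/- Let K ⊂ ℝ² be a nonempty compact set. There is no twice continuously differentiable function u : ℝ² \ K → ℝ such that u > 0 and −Δu ≥ 0 on ℝ² \ K and u(x) → 0 as |x| → ∞. In other words, in dimension N = 2 there is no positive superharmonic ground state in the exterior of a compact set. -/

import Mathlib

open Metric Set MeasureTheory Filter

noncomputable def laplacian {N : ℕ} (u : EuclideanSpace ℝ (Fin N) → ℝ)
    (x : EuclideanSpace ℝ (Fin N)) : ℝ :=
  ∑ i, iteratedFDeriv ℝ 2 u x ![EuclideanSpace.single i 1, EuclideanSpace.single i 1]

/-!
In dimension at most two, the functions `x ↦ log (‖x‖² - a)` with `a > 0` are strictly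
superharmonic and tend to `∞` at infinity. Adding a small multiple of one of them to a
superharmonic function that is bounded below away from the origin makes the minimum principle
applicable on unbounded closed sets, since a strictly superharmonic function has no local minimum.
Letting the multiple tend to zero bounds the original function below by its infimum over the
boundary; for a positive function outside a ball, compactness of the sphere makes this bound
positive.
-/

open scoped Topology Laplacian

section SecondDerivative

lemma deriv_deriv_nonneg_of_isLocalMin {f : ℝ → ℝ} {a : ℝ} (hmin : IsLocalMin f a)
    (hf : ContinuousAt f a) : 0 ≤ deriv (deriv f) a := by
  by_contra! hneg
  have hmax : IsLocalMax f a := isLocalMax_of_deriv_deriv_neg hneg hmin.deriv_eq_zero hf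
  have hconst : f =ᶠ[𝓝 a] fun _ ↦ f a := by
    filter_upwards [hmin, hmax] with t hle hge using le_antisymm hge hle
  have hzero : deriv (deriv f) a = 0 := by simpa using hconst.deriv.deriv_eq
  exact hneg.ne hzero

variable {𝕜 E F : Type*} [NontriviallyNormedField 𝕜] [NormedAddCommGroup E] [NormedSpace 𝕜 E]
  [NormedAddCommGroup F] [NormedSpace 𝕜 F] {f : E → F} {x : E}

lemma eventually_differentiableAt_of_contDiffAt {n : WithTop ℕ∞} (hf : ContDiffAt 𝕜 n f x)
    (hn : 1 ≤ n) : ∀ᶠ y in 𝓝 x, DifferentiableAt 𝕜 f y :=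
  ((hf.of_le hn).eventually (by simp)).mono fun _ hy ↦ hy.differentiableAt one_ne_zero

lemma deriv_deriv_add_smul (hf : ContDiffAt 𝕜 2 f x) (v : E) :
    deriv (deriv fun t : 𝕜 ↦ f (x + t • v)) 0 = iteratedFDeriv 𝕜 2 f x ![v, v] := by
  have hline : Tendsto (fun t : 𝕜 ↦ x + t • v) (𝓝 0) (𝓝 x) := by
    have : Continuous fun t : 𝕜 ↦ x + t • v := by fun_prop
    simpa using this.tendsto 0
  have hfirst : (deriv fun t : 𝕜 ↦ f (x + t • v)) =ᶠ[𝓝 0]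
      fun t ↦ iteratedFDeriv 𝕜 1 f (x + t • v) fun _ ↦ v := by
    filter_upwards [hline.eventually
      (eventually_differentiableAt_of_contDiffAt hf one_le_two)] with t ht
    rw [ht.deriv_comp_add_smul, iteratedFDeriv_one_apply]
  have hconst : ![v, v] = fun _ ↦ v := by
    ext i
    fin_cases i <;> rfl
  have hf0 : ContDiffAt 𝕜 ((1 : ℕ) + 1) f (x + (0 : 𝕜) • v) := by
    simpa [one_add_one_eq_two] using hf
  rw [hfirst.deriv_eq, hf0.deriv_fderiv_add_smul, zero_smul, add_zero, hconst]

lemma iteratedFDeriv_two_comp {g : 𝕜 → 𝕜} {f : E → 𝕜} (hg : ContDiffAt 𝕜 2 g (f x))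
    (hf : ContDiffAt 𝕜 2 f x) (v w : E) :
    iteratedFDeriv 𝕜 2 (fun y ↦ g (f y)) x ![v, w] =
      deriv (deriv g) (f x) * (fderiv 𝕜 f x v * fderiv 𝕜 f x w) +
        deriv g (f x) * iteratedFDeriv 𝕜 2 f x ![v, w] := by
  have hfirst : fderiv 𝕜 (fun y ↦ g (f y)) =ᶠ[𝓝 x] fun y ↦ deriv g (f y) • fderiv 𝕜 f y := by
    filter_upwards [eventually_differentiableAt_of_contDiffAt hf one_le_two,
      hf.continuousAt.eventually (eventually_differentiableAt_of_contDiffAt hg one_le_two)]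
      with y hfy hgy
    exact (hgy.hasDerivAt.comp_hasFDerivAt y hfy.hasFDerivAt).fderiv
  have hf1 := (hf.differentiableAt two_ne_zero).hasFDerivAt
  have hf2 := ((hf.fderiv_right (m := 1) (by norm_num)).differentiableAt one_ne_zero).hasFDerivAt
  have hg2 := ((hg.derivWithin (m := 1) (by norm_num)).differentiableAt one_ne_zero).hasDerivAt
  have hsecond : HasFDerivAt (fun y ↦ deriv g (f y) • fderiv 𝕜 f y)
      (deriv g (f x) • fderiv 𝕜 (fderiv 𝕜 f) x +
        (deriv (deriv g) (f x) • fderiv 𝕜 f x).smulRight (fderiv 𝕜 f x)) x :=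
    (hg2.comp_hasFDerivAt x hf1).smul hf2
  simp only [iteratedFDeriv_two_apply, hfirst.fderiv_eq, hsecond.fderiv, Matrix.cons_val_zero,
    add_apply, smul_apply, ContinuousLinearMap.smulRight_apply, smul_eq_mul, Matrix.cons_val_one,
    Matrix.cons_val_fin_one]
  ring

end SecondDerivative

section LaplacianFormulas

variable {E : Type*} [NormedAddCommGroup E] [InnerProductSpace ℝ E] [FiniteDimensional ℝ E]
  {f : E → ℝ} {x : E}

lemma laplacian_nonneg_of_isLocalMin (hmin : IsLocalMin f x) (hf : ContDiffAt ℝ 2 f x) :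
    0 ≤ Δ f x := by
  rw [InnerProductSpace.laplacian_eq_iteratedFDeriv_stdOrthonormalBasis]
  refine Finset.sum_nonneg fun i _ ↦ ?_
  rw [← deriv_deriv_add_smul hf]
  set line : ℝ → E := fun t ↦ x + t • stdOrthonormalBasis ℝ E i
  have hline : ContinuousAt line 0 := by fun_prop
  have hline0 : line 0 = x := by simp [line]
  rw [← hline0] at hmin hf
  exact deriv_deriv_nonneg_of_isLocalMin (IsMinFilter.comp_tendsto hmin hline)
    (hf.continuousAt.comp hline)

lemma sum_sq_apply_orthonormalBasis {ι : Type*} [Fintype ι] (b : OrthonormalBasis ι ℝ E)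
    (l : E →L[ℝ] ℝ) : ∑ i, l (b i) ^ 2 = ‖l‖ ^ 2 := by
  obtain ⟨y, rfl⟩ := (InnerProductSpace.toDual ℝ E).surjective l
  simpa using b.sum_sq_norm_inner_left y

lemma laplacian_comp {g : ℝ → ℝ} (hg : ContDiffAt ℝ 2 g (f x)) (hf : ContDiffAt ℝ 2 f x) :
    Δ (fun y ↦ g (f y)) x =
      deriv (deriv g) (f x) * ‖fderiv ℝ f x‖ ^ 2 + deriv g (f x) * Δ f x := by
  simp only [InnerProductSpace.laplacian_eq_iteratedFDeriv_stdOrthonormalBasis,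
    iteratedFDeriv_two_comp hg hf, Finset.sum_add_distrib, ← Finset.mul_sum, ← pow_two,
    sum_sq_apply_orthonormalBasis]

lemma laplacian_norm_sq : Δ (fun y : E ↦ ‖y‖ ^ 2) x = 2 * Module.finrank ℝ E := by
  have hsecond : fderiv ℝ (fderiv ℝ fun y : E ↦ ‖y‖ ^ 2) x = 2 • innerSL ℝ := by
    rw [fderiv_norm_sq]
    exact (2 • innerSL ℝ (E := E)).fderiv
  have hdir (v : E) : iteratedFDeriv ℝ 2 (fun y : E ↦ ‖y‖ ^ 2) x ![v, v] = 2 * ‖v‖ ^ 2 := by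
    rw [iteratedFDeriv_two_apply, hsecond, ← real_inner_self_eq_norm_sq, two_mul]
    exact two_nsmul _
  simp [InnerProductSpace.laplacian_eq_iteratedFDeriv_stdOrthonormalBasis, hdir, mul_comm]

lemma laplacian_comp_norm_sq {g : ℝ → ℝ} (hg : ContDiffAt ℝ 2 g (‖x‖ ^ 2)) :
    Δ (fun y : E ↦ g (‖y‖ ^ 2)) x =
      4 * ‖x‖ ^ 2 * deriv (deriv g) (‖x‖ ^ 2) + 2 * Module.finrank ℝ E * deriv g (‖x‖ ^ 2) := by
  have hnorm : ‖fderiv ℝ (fun y : E ↦ ‖y‖ ^ 2) x‖ = 2 * ‖x‖ := by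
    rw [fderiv_norm_sq_apply, ← Nat.cast_smul_eq_nsmul ℝ, norm_smul, innerSL_apply_norm]
    simp
  rw [laplacian_comp (f := fun y : E ↦ ‖y‖ ^ 2) hg (contDiff_norm_sq ℝ).contDiffAt, hnorm,
    laplacian_norm_sq]
  ring

lemma laplacian_log_norm_sq_sub {a : ℝ} (hx : ‖x‖ ^ 2 ≠ a) :
    Δ (fun y : E ↦ Real.log (‖y‖ ^ 2 - a)) x =
      2 * Module.finrank ℝ E / (‖x‖ ^ 2 - a) - 4 * ‖x‖ ^ 2 / (‖x‖ ^ 2 - a) ^ 2 := by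
  have hne : ‖x‖ ^ 2 - a ≠ 0 := sub_ne_zero.2 hx
  have hderiv : deriv (fun s ↦ Real.log (s - a)) = fun s ↦ (s - a)⁻¹ := by
    ext s
    rw [deriv_comp_sub_const, Real.deriv_log]
  have hderiv2 : deriv (fun s ↦ (s - a)⁻¹) (‖x‖ ^ 2) = -((‖x‖ ^ 2 - a) ^ 2)⁻¹ := by
    rw [deriv_comp_sub_const, deriv_inv]
  rw [laplacian_comp_norm_sq (g := fun s ↦ Real.log (s - a))
    ((contDiffAt_id.sub contDiffAt_const).log hne), hderiv, hderiv2]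
  ring

lemma laplacian_log_norm_sq_sub_neg (hE : Module.finrank ℝ E ≤ 2) {a : ℝ} (ha : 0 < a)
    (hx : a < ‖x‖ ^ 2) : Δ (fun y : E ↦ Real.log (‖y‖ ^ 2 - a)) x < 0 := by
  have hpos : 0 < ‖x‖ ^ 2 - a := sub_pos.2 hx
  have hdim : (Module.finrank ℝ E : ℝ) ≤ 2 := mod_cast hE
  rw [laplacian_log_norm_sq_sub hx.ne', sub_neg, div_lt_div_iff₀ hpos (by positivity)]
  calc 2 * (Module.finrank ℝ E : ℝ) * (‖x‖ ^ 2 - a) ^ 2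
      ≤ 2 * 2 * (‖x‖ ^ 2 - a) ^ 2 := by gcongr
    _ < 4 * ‖x‖ ^ 2 * (‖x‖ ^ 2 - a) := by nlinarith

end LaplacianFormulas

lemma tendsto_log_norm_sq_sub_cocompact {E : Type*} [NormedAddCommGroup E] [ProperSpace E]
    (a : ℝ) :
    Tendsto (fun x : E ↦ Real.log (‖x‖ ^ 2 - a)) (cocompact E) atTop :=
  Real.tendsto_log_atTop.comp <| tendsto_atTop_add_const_right _ _ <|
    (tendsto_pow_atTop two_ne_zero).comp tendsto_norm_cocompact_atTop

section MinimumPrinciple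

variable {E : Type*} [NormedAddCommGroup E] [InnerProductSpace ℝ E] [FiniteDimensional ℝ E]
  {s : Set E} {u : E → ℝ} {m : ℝ}

lemma le_of_laplacian_neg_of_le_frontier (hs : IsClosed s) (hcont : ContinuousOn u s)
    (hdiff : ∀ x ∈ interior s, ContDiffAt ℝ 2 u x) (hΔ : ∀ x ∈ interior s, Δ u x < 0)
    (hinfty : ∀ᶠ x in cocompact E ⊓ 𝓟 s, m ≤ u x) (hfrontier : ∀ x ∈ frontier s, m ≤ u x)
    {x : E} (hx : x ∈ s) : m ≤ u x := by
  by_contra! hlt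
  obtain ⟨p, hps, hp⟩ := hcont.exists_isMinOn' hs hx (hinfty.mono fun y hy ↦ hlt.le.trans hy)
  have hpm : u p < m := (hp hx).trans_lt hlt
  have hpint : p ∈ interior s := by
    by_contra hpint
    exact hpm.not_ge (hfrontier p ⟨subset_closure hps, hpint⟩)
  have hmin : IsLocalMin u p := hp.isLocalMin (mem_interior_iff_mem_nhds.1 hpint)
  exact (hΔ p hpint).not_ge (laplacian_nonneg_of_isLocalMin hmin (hdiff p hpint))

lemma add_log_le_add_log_of_laplacian_nonpos (hE : Module.finrank ℝ E ≤ 2) (hs : IsClosed s)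
    {R : ℝ} (hR : 0 ≤ R) (hsR : ∀ x ∈ s, R ≤ ‖x‖) (hcont : ContinuousOn u s)
    (hdiff : ∀ x ∈ interior s, ContDiffAt ℝ 2 u x) (hΔ : ∀ x ∈ interior s, Δ u x ≤ 0)
    (hbdd : BddBelow (u '' s)) (hfrontier : ∀ x ∈ frontier s, m ≤ u x)
    {a ε : ℝ} (ha : 0 < a) (haR : a < R ^ 2) (hε : 0 < ε) {x : E} (hx : x ∈ s) :
    m + ε * Real.log (R ^ 2 - a) ≤ u x + ε * Real.log (‖x‖ ^ 2 - a) := by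
  set barrier : E → ℝ := fun y ↦ Real.log (‖y‖ ^ 2 - a)
  have hR_le {y : E} (hy : y ∈ s) : R ^ 2 ≤ ‖y‖ ^ 2 := by gcongr; exact hsR y hy
  have hsmooth (y : E) (hy : y ∈ s) : ContDiffAt ℝ 2 barrier y :=
    ((contDiff_norm_sq ℝ).contDiffAt.sub contDiffAt_const).log
      (sub_pos.2 (haR.trans_le (hR_le hy))).ne'
  refine le_of_laplacian_neg_of_le_frontier (u := u + ε • barrier) hs ?_ ?_ ?_ ?_ ?_ hx
  · exact hcont.add fun y hy ↦ ((hsmooth y hy).continuousAt.const_smul ε).continuousWithinAt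
  · exact fun y hy ↦ (hdiff y hy).add (contDiffAt_const.smul (hsmooth y (interior_subset hy)))
  · intro y hy
    have hys := interior_subset hy
    have hsmul : ContDiffAt ℝ 2 (ε • barrier) y := (hsmooth y hys).const_smul ε
    rw [(hdiff y hy).laplacian_add hsmul, InnerProductSpace.laplacian_smul ε (hsmooth y hys)]
    have hneg : Δ barrier y < 0 :=
      laplacian_log_norm_sq_sub_neg hE ha (haR.trans_le (hR_le hys))
    exact add_neg_of_nonpos_of_neg (hΔ y hy) (smul_neg_of_pos_of_neg hε hneg)
  · obtain ⟨B, hB⟩ := hbdd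
    have hbarrier_top : Tendsto (fun y ↦ ε * barrier y) (cocompact E) atTop :=
      (tendsto_log_norm_sq_sub_cocompact a).const_mul_atTop hε
    have hlarge := hbarrier_top.eventually_ge_atTop (m + ε * Real.log (R ^ 2 - a) - B)
    filter_upwards [hlarge.filter_mono inf_le_left, mem_inf_of_right (mem_principal_self s)]
      with y hy hys
    have hBy : B ≤ u y := hB (mem_image_of_mem u hys)
    simp only [Pi.add_apply, Pi.smul_apply, smul_eq_mul]
    linarith
  · intro y hy
    have hlog : Real.log (R ^ 2 - a) ≤ barrier y :=
      Real.log_le_log (sub_pos.2 haR) (sub_le_sub_right (hR_le (hs.frontier_subset hy)) a)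
    exact add_le_add (hfrontier y hy) (mul_le_mul_of_nonneg_left hlog hε.le)

lemma le_of_laplacian_nonpos_of_le_frontier (hE : Module.finrank ℝ E ≤ 2) (hs : IsClosed s)
    {R : ℝ} (hR : 0 < R) (hsR : ∀ x ∈ s, R ≤ ‖x‖) (hcont : ContinuousOn u s)
    (hdiff : ∀ x ∈ interior s, ContDiffAt ℝ 2 u x) (hΔ : ∀ x ∈ interior s, Δ u x ≤ 0)
    (hbdd : BddBelow (u '' s)) (hfrontier : ∀ x ∈ frontier s, m ≤ u x) {x : E} (hx : x ∈ s) :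
    m ≤ u x := by
  have hlim (c L : ℝ) : Tendsto (fun ε ↦ c + ε * L) (𝓝[>] 0) (𝓝 c) := by
    have : Continuous fun ε ↦ c + ε * L := by fun_prop
    simpa using (this.tendsto 0).mono_left nhdsWithin_le_nhds
  refine le_of_tendsto_of_tendsto (hlim m (Real.log (R ^ 2 - R ^ 2 / 2)))
    (hlim (u x) (Real.log (‖x‖ ^ 2 - R ^ 2 / 2))) ?_
  filter_upwards [self_mem_nhdsWithin] with ε hε
  exact add_log_le_add_log_of_laplacian_nonpos hE hs hR.le hsR hcont hdiff hΔ hbdd hfrontier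
    (by positivity) (half_lt_self (by positivity)) hε hx

end MinimumPrinciple

lemma laplacian_eq_innerProductSpace_laplacian {N : ℕ} (u : EuclideanSpace ℝ (Fin N) → ℝ) :
    laplacian u = Δ u := by
  ext x
  simp [laplacian, InnerProductSpace.laplacian_eq_iteratedFDeriv_orthonormalBasis u
    (EuclideanSpace.basisFun (Fin N) ℝ)]

theorem statement_7_general {E : Type*} [NormedAddCommGroup E] [InnerProductSpace ℝ E]
    [FiniteDimensional ℝ E] (hE : Module.finrank ℝ E ≤ 2) {u : E → ℝ}
    (hu : ∀ᶠ x in cocompact E, ContDiffAt ℝ 2 u x ∧ 0 < u x ∧ Δ u x ≤ 0) :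
    ∃ c > 0, ∀ᶠ x in cocompact E, c ≤ u x := by
  obtain ⟨R, hR, hRu⟩ : ∃ R > 0, ∀ x : E, R ≤ ‖x‖ → ContDiffAt ℝ 2 u x ∧ 0 < u x ∧ Δ u x ≤ 0 := by
    rw [← Metric.cobounded_eq_cocompact, hasBasis_cobounded_norm.eventually_iff] at hu
    obtain ⟨R, -, hR⟩ := hu
    exact ⟨max R 1, by positivity, fun x hx ↦ hR ((le_max_left R 1).trans hx)⟩
  set s : Set E := {x | R ≤ ‖x‖}
  have hs : IsClosed s := isClosed_le continuous_const continuous_norm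
  have hfrontier : frontier s ⊆ sphere 0 R := fun x hx ↦ by
    simpa using (frontier_le_subset_eq continuous_const continuous_norm hx).symm
  have hcont : ContinuousOn u s := fun x hx ↦ (hRu x hx).1.continuousAt.continuousWithinAt
  obtain ⟨c, hc, hcu⟩ : ∃ c, 0 < c ∧ ∀ x ∈ frontier s, c ≤ u x :=
    ((isCompact_sphere 0 R).of_isClosed_subset isClosed_frontier hfrontier).exists_forall_le'
      (hcont.mono hs.frontier_subset) fun x hx ↦ (hRu x (hs.frontier_subset hx)).2.1
  refine ⟨c, hc, (tendsto_norm_cocompact_atTop.eventually_ge_atTop R).mono fun x hx ↦ ?_⟩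
  exact le_of_laplacian_nonpos_of_le_frontier hE hs hR (fun _ hy ↦ hy) hcont
    (fun y hy ↦ (hRu y (interior_subset (s := s) hy)).1)
    (fun y hy ↦ (hRu y (interior_subset (s := s) hy)).2.2)
    ⟨0, forall_mem_image.2 fun y hy ↦ (hRu y hy).2.1.le⟩ hcu hx

/-- Remark after Theorem 3.4: in dimension two there is no positive superharmonic
ground state in the exterior of a compact set. -/
theorem statement_7 (K : Set (EuclideanSpace ℝ (Fin 2))) (hK : IsCompact K)
    (hKne : K.Nonempty) :
    ¬ ∃ u : EuclideanSpace ℝ (Fin 2) → ℝ,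
        ContDiffOn ℝ 2 u Kᶜ ∧
        (∀ x ∈ Kᶜ, 0 < u x ∧ 0 ≤ -laplacian u x) ∧
        Tendsto u (Filter.cocompact (EuclideanSpace ℝ (Fin 2))) (nhds 0) := by
  rintro ⟨u, hC, hu, hlim⟩
  have hfar : ∀ᶠ x in cocompact _, ContDiffAt ℝ 2 u x ∧ 0 < u x ∧ Δ u x ≤ 0 := by
    filter_upwards [hK.compl_mem_cocompact] with x hx
    exact ⟨hC.contDiffAt (hK.isClosed.isOpen_compl.mem_nhds hx), (hu x hx).1,
      laplacian_eq_innerProductSpace_laplacian u ▸ neg_nonneg.1 (hu x hx).2⟩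
  obtain ⟨c, hc, hcu⟩ := statement_7_general (by simp) hfar
  obtain ⟨x, hcx, hxc⟩ := (hcu.and (hlim.eventually_lt_const hc)).exists
  exact hxc.not_ge hcx
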